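/- For all integers m, n ≥ 2, the complete bipartite graph K_{m,n} satisfies car(K_{m,n}) = 3. -/

import Mathlib

open SimpleGraph

/-- A set `S` is cycle convex in `G` if no vertex `w` outside `S` is such that the
subgraph induced by `S ∪ {w}` contains a cycle through `w`. -/
def IsCycleConvex {V : Type*} (G : SimpleGraph V) (S : Set V) : Prop :=
  ∀ w : V, w ∉ S →
    ¬ ∃ c : (G.induce (S ∪ {w})).Walk ⟨w, Set.mem_union_right S rfl⟩
        ⟨w, Set.mem_union_right S rfl⟩, c.IsCycle

/-- The cycle convex hull of `S`: the smallest cycle convex set containing `S`. -/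
def cycleHull {V : Type*} (G : SimpleGraph V) (S : Set V) : Set V :=
  ⋂₀ {T : Set V | S ⊆ T ∧ IsCycleConvex G T}

/-- `S` is Carathéodory independent in the cycle convexity of `G`. -/
def CIndep {V : Type*} (G : SimpleGraph V) (S : Set V) : Prop :=
  ∃ p ∈ cycleHull G S, ∀ a ∈ S, p ∉ cycleHull G (S \ {a})

/-- The Carathéodory number of `G` in the cycle convexity. -/
noncomputable def carNumber {V : Type*} (G : SimpleGraph V) : ℕ :=
  sSup {n : ℕ | ∃ S : Set V, CIndep G S ∧ S.ncard = n}

theorem IsCycleConvex.mem_of_adj {V : Type*} {G : SimpleGraph V} {T : Set V}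
    (hT : IsCycleConvex G T) {w x y z : V} (hx : x ∈ T) (hy : y ∈ T) (hz : z ∈ T)
    (hyz : y ≠ z) (hwy : G.Adj w y) (hwz : G.Adj w z) (hxy : G.Adj x y) (hxz : G.Adj x z) :
    w ∈ T := by
  by_contra hw
  refine hT w hw ?_
  let w' : ↥(T ∪ {w}) := ⟨w, Set.mem_union_right T rfl⟩
  let x' : ↥(T ∪ {w}) := ⟨x, Or.inl hx⟩
  let y' : ↥(T ∪ {w}) := ⟨y, Or.inl hy⟩
  let z' : ↥(T ∪ {w}) := ⟨z, Or.inl hz⟩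
  have h₁ : (G.induce (T ∪ {w})).Adj w' y' := hwy
  have h₂ : (G.induce (T ∪ {w})).Adj y' x' := hxy.symm
  have h₃ : (G.induce (T ∪ {w})).Adj x' z' := hxz
  have h₄ : (G.induce (T ∪ {w})).Adj z' w' := hwz.symm
  have hwx : w' ≠ x' := fun h => hw (Set.mem_of_eq_of_mem (congrArg Subtype.val h) hx)
  have hyz' : y' ≠ z' := fun h => hyz (congrArg Subtype.val h)
  have hcycle : (Walk.cons h₁ (.cons h₂ (.cons h₃ (.cons h₄ .nil)))).IsCycle := by
    rw [Walk.cons_isCycle_iff]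
    simp [Walk.cons_isPath_iff, hyz', hwx, hwx.symm, h₁.ne, h₁.ne.symm, h₂.ne, h₃.ne, h₄.ne]
  exact ⟨_, hcycle⟩

/-- A cycle through a vertex `w` outside `S` supplies two neighbours of `w` in `S`, one of which
has a further neighbour in `S`. -/
theorem exists_adj_of_not_isCycleConvex {V : Type*} {G : SimpleGraph V} {S : Set V}
    (hS : ¬ IsCycleConvex G S) :
    ∃ w, ∃ x ∈ S, ∃ y ∈ S, ∃ z ∈ S, y ≠ z ∧ G.Adj w y ∧ G.Adj w z ∧ G.Adj x y := by
  simp only [IsCycleConvex, not_forall, not_not] at hS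
  obtain ⟨w, hw, c, hc⟩ := hS
  have hlen := hc.three_le_length
  have mem_of_ne : ∀ v : ↥(S ∪ {w}), v ≠ ⟨w, Set.mem_union_right S rfl⟩ → (v : V) ∈ S :=
    fun v hv => v.2.resolve_right fun h => hv (Subtype.ext h)
  have hnil : ¬ c.Nil := hc.not_nil
  have hwy := c.adj_snd hnil
  have hzw := c.adj_penultimate hnil
  have hyx : (G.induce (S ∪ {w})).Adj (c.getVert 1) (c.getVert 2) :=
    c.adj_getVert_succ (by omega)
  have hxw : c.getVert 2 ≠ ⟨w, Set.mem_union_right S rfl⟩ := by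
    intro h
    have := (hc.getVert_endpoint_iff (i := 2) (by omega)).1 h
    omega
  exact ⟨w, _, mem_of_ne _ hxw, _, mem_of_ne _ hwy.ne.symm, _, mem_of_ne _ hzw.ne,
    fun h => hc.snd_ne_penultimate (Subtype.ext h), hwy, hzw.symm, hyx.symm⟩

theorem subset_cycleHull {V : Type*} (G : SimpleGraph V) (S : Set V) : S ⊆ cycleHull G S :=
  Set.subset_sInter fun _ hT => hT.1

theorem IsCycleConvex.cycleHull_eq {V : Type*} {G : SimpleGraph V} {S : Set V}
    (hS : IsCycleConvex G S) : cycleHull G S = S :=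
  Set.Subset.antisymm (Set.sInter_subset_of_mem ⟨subset_rfl, hS⟩) (subset_cycleHull G S)

section CompleteBipartite

variable {α β : Type*}

theorem isCycleConvex_completeBipartiteGraph_of_not_adj {S : Set (α ⊕ β)}
    (hS : ∀ x ∈ S, ∀ y ∈ S, ¬ (completeBipartiteGraph α β).Adj x y) :
    IsCycleConvex (completeBipartiteGraph α β) S := by
  by_contra h
  obtain ⟨w, x, hx, y, hy, -, -, -, -, -, hxy⟩ := exists_adj_of_not_isCycleConvex h
  exact hS x hx y hy hxy

theorem isCycleConvex_completeBipartiteGraph_pair (a b : α ⊕ β) :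
    IsCycleConvex (completeBipartiteGraph α β) {a, b} := by
  by_contra h
  obtain ⟨w, x, hx, y, hy, z, hz, hyz, hwy, hwz, hxy⟩ := exists_adj_of_not_isCycleConvex h
  have hxz : x = z := by
    have := hxy.ne
    simp only [Set.mem_insert_iff, Set.mem_singleton_iff] at hx hy hz
    grind
  subst hxz
  cases w <;> cases x <;> cases y <;> simp_all

theorem IsCycleConvex.eq_univ_of_adj [Nontrivial α] [Nontrivial β] {T : Set (α ⊕ β)}
    (hT : IsCycleConvex (completeBipartiteGraph α β) T) {l : α} {r : β} {c : α ⊕ β}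
    (hl : .inl l ∈ T) (hr : .inr r ∈ T) (hc : c ∈ T) (hcl : c ≠ .inl l) (hcr : c ≠ .inr r) :
    T = Set.univ := by
  have left_of_right : (∀ b, .inr b ∈ T) → ∀ a, .inl a ∈ T := fun h a => by
    obtain ⟨b, hb⟩ := exists_ne r
    exact hT.mem_of_adj hl (h b) hr (by simpa using hb) (by simp) (by simp) (by simp) (by simp)
  have right_of_left : (∀ a, .inl a ∈ T) → ∀ b, .inr b ∈ T := fun h b => by
    obtain ⟨a, ha⟩ := exists_ne l
    exact hT.mem_of_adj hr (h a) hl (by simpa using ha) (by simp) (by simp) (by simp) (by simp)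
  rw [Set.eq_univ_iff_forall, Sum.forall]
  cases c with
  | inl c =>
    have h : ∀ b, .inr b ∈ T := fun b =>
      hT.mem_of_adj hr hc hl hcl (by simp) (by simp) (by simp) (by simp)
    exact ⟨left_of_right h, h⟩
  | inr c =>
    have h : ∀ a, .inl a ∈ T := fun a =>
      hT.mem_of_adj hl hc hr hcr (by simp) (by simp) (by simp) (by simp)
    exact ⟨h, right_of_left h⟩

theorem cycleHull_completeBipartiteGraph_eq_univ [Nontrivial α] [Nontrivial β] {S : Set (α ⊕ β)}
    {l : α} {r : β} {c : α ⊕ β} (hl : .inl l ∈ S) (hr : .inr r ∈ S) (hc : c ∈ S)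
    (hcl : c ≠ .inl l) (hcr : c ≠ .inr r) :
    cycleHull (completeBipartiteGraph α β) S = Set.univ :=
  Set.sInter_eq_univ.2 fun _ hT =>
    hT.2.eq_univ_of_adj (hT.1 hl) (hT.1 hr) (hT.1 hc) hcl hcr

theorem CIndep.ncard_le_three_of_completeBipartiteGraph [Nontrivial α] [Nontrivial β]
    {S : Set (α ⊕ β)} (hS : CIndep (completeBipartiteGraph α β) S) : S.ncard ≤ 3 := by
  obtain ⟨p, hp, hpS⟩ := hS
  by_contra! hcard
  by_cases h : ∃ l r, .inl l ∈ S ∧ .inr r ∈ S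
  · obtain ⟨l, r, hl, hr⟩ := h
    have hpair : ({.inl l, .inr r} : Set (α ⊕ β)).ncard ≤ 2 := by simp
    obtain ⟨c, hc, hc'⟩ := Set.exists_mem_notMem_of_ncard_lt_ncard
      (s := {.inl l, .inr r}) (t := S) (by omega)
    obtain ⟨d, hd, hd'⟩ := Set.exists_mem_notMem_of_ncard_lt_ncard
      (s := insert c {.inl l, .inr r}) (t := S) ((Set.ncard_insert_le _ _).trans_lt (by omega))
    simp only [Set.mem_insert_iff, Set.mem_singleton_iff, not_or] at hc' hd'
    refine hpS d hd ?_
    rw [cycleHull_completeBipartiteGraph_eq_univ (S := S \ {d})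
      ⟨hl, Ne.symm hd'.2.1⟩ ⟨hr, Ne.symm hd'.2.2⟩ ⟨hc, Ne.symm hd'.1⟩ hc'.1 hc'.2]
    trivial
  · rw [(isCycleConvex_completeBipartiteGraph_of_not_adj ?_).cycleHull_eq] at hp
    · obtain ⟨a, ha, hap⟩ := Set.exists_ne_of_one_lt_ncard (by omega : 1 < S.ncard) p
      exact hpS a ha (subset_cycleHull _ _ ⟨hp, hap.symm⟩)
    · push Not at h
      rintro (x | x) hx (y | y) hy <;> simp
      · exact h x y hx hy
      · exact h y x hy hx

theorem cIndep_completeBipartiteGraph_triple [Nontrivial α] [Nontrivial β] {a b : α} (hab : a ≠ b)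
    (r : β) : CIndep (completeBipartiteGraph α β) {.inl a, .inl b, .inr r} := by
  obtain ⟨s, hs⟩ := exists_ne r
  refine ⟨.inr s, ?_, fun x hx => ?_⟩
  · rw [cycleHull_completeBipartiteGraph_eq_univ (l := a) (r := r) (c := .inl b)
      (by simp) (by simp) (by simp) (by simpa using hab.symm) (by simp)]
    trivial
  · obtain ⟨y, z, hyz⟩ : ∃ y z, ({.inl a, .inl b, .inr r} : Set (α ⊕ β)) \ {x} = {y, z} := by
      suffices h : (({.inl a, .inl b, .inr r} : Set (α ⊕ β)) \ {x}).ncard = 2 by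
        obtain ⟨y, z, -, hyz⟩ := Set.ncard_eq_two.1 h
        exact ⟨y, z, hyz⟩
      rw [Set.ncard_sdiff_singleton_of_mem hx,
        Set.ncard_eq_three.2 ⟨_, _, _, by simpa using hab, by simp, by simp, rfl⟩]
    have hsub : Sum.inr s ∉ ({.inl a, .inl b, .inr r} : Set (α ⊕ β)) \ {x} := by simp [hs]
    rw [hyz] at hsub ⊢
    rwa [(isCycleConvex_completeBipartiteGraph_pair y z).cycleHull_eq]

theorem carNumber_completeBipartiteGraph [Nontrivial α] [Nontrivial β] :
    carNumber (completeBipartiteGraph α β) = 3 := by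
  refine IsGreatest.csSup_eq ⟨?_, ?_⟩
  · obtain ⟨a, b, hab⟩ := exists_pair_ne α
    obtain ⟨r⟩ := (inferInstance : Nonempty β)
    exact ⟨_, cIndep_completeBipartiteGraph_triple hab r,
      Set.ncard_eq_three.2 ⟨_, _, _, by simpa using hab, by simp, by simp, rfl⟩⟩
  · rintro _ ⟨S, hS, rfl⟩
    exact hS.ncard_le_three_of_completeBipartiteGraph

end CompleteBipartite

/-- The complete bipartite graph with parts of sizes m, n ≥ 2 has Caratheodory
number 3. -/
theorem stmt_10 (m n : ℕ) (hm : 2 ≤ m) (hn : 2 ≤ n) :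
    carNumber (completeBipartiteGraph (Fin m) (Fin n)) = 3 := by
  have : Nontrivial (Fin m) := Fin.nontrivial_iff_two_le.2 hm
  have : Nontrivial (Fin n) := Fin.nontrivial_iff_two_le.2 hn
  exact carNumber_completeBipartiteGraph
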